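/- For every integer p ≥ 2, every n ≥ 1, and every k with 0 ≤ k ≤ n, the natural number (p-1)·n + k divides (p-1)·(n-k)·C((p-1)·n + k, k). -/

import Mathlib

/-! Modulo `q * n + k` the factor `q * (n - k)` is congruent to `-(q + 1) * k`, so everything
reduces to the absorption identity `k * C(m, k) = m * C(m - 1, k - 1)` at `m = q * n + k`. -/

theorem dvd_mul_choose_self : ∀ m k : ℕ, m ∣ k * m.choose k
  | _, 0 => by simp
  | 0, _ + 1 => by simp
  | m + 1, k + 1 => ⟨m.choose k, by rw [Nat.add_one_mul_choose_eq, mul_comm]⟩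

theorem fuss_catalan_triangle_divisibility_general (q n k : ℕ) :
    ((q * n + k : ℕ) : ℤ) ∣ q * ((n : ℤ) - k) * ((q * n + k).choose k : ℕ) := by
  have h_absorb : ((q * n + k : ℕ) : ℤ) ∣ k * ((q * n + k).choose k : ℕ) :=
    mod_cast dvd_mul_choose_self (q * n + k) k
  have h_factor : q * ((n : ℤ) - k) = (q * n + k : ℕ) - (q + 1) * k := by
    push_cast
    ring
  rw [h_factor, sub_mul, mul_assoc (q + 1 : ℤ)]
  exact dvd_sub (dvd_mul_right _ _) (h_absorb.mul_left _)

theorem fuss_catalan_triangle_divisibility (p : ℕ) (hp : 2 ≤ p) (n : ℕ) (hn : 1 ≤ n)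
    (k : ℕ) (hk : k ≤ n) :
    ((p - 1) * n + k) ∣ (p - 1) * (n - k) * Nat.choose ((p - 1) * n + k) k := by
  have h := fuss_catalan_triangle_divisibility_general (p - 1) n k
  rw [← Nat.cast_sub hk] at h
  exact mod_cast h
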